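/- Let 𝒳 be a finite alphabet and let P, Q be probability mass functions on 𝒳 with P(x) > 0 and Q(x) > 0 for all x, and P ≠ Q. Then the partial divergence ρ ↦ d_ρ(P‖Q) is strictly convex on [0,1]: for all ρ₁ ≠ ρ₂ in [0,1] and all λ ∈ (0,1), d_{λρ₁+(1−λ)ρ₂}(P‖Q) < λ·d_{ρ₁}(P‖Q) + (1−λ)·d_{ρ₂}(P‖Q). -/

import Mathlib

/-- A probability mass function on a finite alphabet. -/
def IsPMF {X : Type*} [Fintype X] (P : X → ℝ) : Prop :=
  (∀ x, 0 ≤ P x) ∧ ∑ x, P x = 1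

/-- Kullback–Leibler divergence (natural logarithm, with the convention
`0 · log (0/q) = 0`). -/
noncomputable def KLdiv {X : Type*} [Fintype X] (P Q : X → ℝ) : ℝ :=
  ∑ x, P x * Real.log (P x / Q x)

/-- Partial divergence between `P` and `Q` with mismatch ratio `ρ`. -/
noncomputable def partialDiv {X : Type*} [Fintype X] (ρ : ℝ) (P Q : X → ℝ) : ℝ :=
  sInf { v : ℝ | ∃ P₁ P₂ : X → ℝ, IsPMF P₁ ∧ IsPMF P₂ ∧
    (∀ x, ρ * P₁ x + (1 - ρ) * P₂ x = P x) ∧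
    v = ρ * KLdiv P₁ Q + (1 - ρ) * KLdiv P₂ P }

/-!
Write `d_ρ` for `partialDiv ρ P Q`. By compactness `d_ρ` is attained by some splitting
`P = ρ P₁ + (1 - ρ) P₂`. Optimal splittings for `ρ₁` and `ρ₂`, averaged with the weights
`l ρ₁, (1 - l) ρ₂` on the first components and `l (1 - ρ₁), (1 - l) (1 - ρ₂)` on the second ones,
give a splitting for `ρ = l ρ₁ + (1 - l) ρ₂` whose cost is at most `l d_{ρ₁} + (1 - l) d_{ρ₂}`.
By strict convexity of the divergence in its first argument, equality forces all relevant first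
components to agree, and likewise the second ones; as `ρ₁ ≠ ρ₂`, the averaged splitting is then the
trivial one `P₁ = P₂ = P`. But the trivial splitting is not optimal: moving `P₁` from `P` towards
the normalization of `Q` lowers `D(P₁‖Q)` to first order, whereas the compensating change of `P₂`
raises `D(P₂‖P)` only to second order.
-/

open Set Filter Topology

section Module

variable {E : Type*} [AddCommGroup E] [Module ℝ E]

theorem exists_weighted_average_of_strictConvexOn {s : Set E} {f : E → ℝ}
    (hf : StrictConvexOn ℝ s f) {u v : E} (hu : u ∈ s) (hv : v ∈ s) {a b : ℝ}
    (ha : 0 ≤ a) (hb : 0 ≤ b) (hab : 0 < a + b) :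
    ∃ w ∈ s, (a + b) • w = a • u + b • v ∧ (a + b) * f w ≤ a * f u + b * f v ∧
      ((a + b) * f w = a * f u + b * f v → a • u = a • w ∧ b • v = b • w) := by
  have hfw : (a + b) * (a / (a + b) * f u + b / (a + b) * f v) = a * f u + b * f v := by
    field_simp
  have hw : (a + b) • ((a / (a + b)) • u + (b / (a + b)) • v) = a • u + b • v := by
    rw [smul_add, smul_smul, smul_smul, mul_div_cancel₀ _ hab.ne', mul_div_cancel₀ _ hab.ne']
  have hle := (convexOn_iff_div.1 hf.convexOn).2 hu hv ha hb hab
  refine ⟨_, convex_iff_div.1 hf.1 hu hv ha hb hab, hw, ?_, fun heq => ?_⟩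
  · rw [← hfw]
    exact mul_le_mul_of_nonneg_left hle hab.le
  rcases ha.eq_or_lt with rfl | ha
  · simp [(zero_add b ▸ hab).ne']
  rcases hb.eq_or_lt with rfl | hb
  · simp [ha.ne']
  have huv : u = v := by
    by_contra hne
    have hlt := (strictConvexOn_iff_div.1 hf).2 hu hv hne ha hb
    exact (mul_lt_mul_of_pos_left hlt hab).ne (heq.trans hfw.symm)
  subst huv
  rw [← add_smul, ← add_div, div_self hab.ne', one_smul]
  exact ⟨rfl, rfl⟩

theorem eq_and_eq_of_affine_combinations_eq {u v p : E} {ρ σ : ℝ} (hρσ : ρ ≠ σ)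
    (hρ : ρ • u + (1 - ρ) • v = p) (hσ : σ • u + (1 - σ) • v = p) : u = p ∧ v = p := by
  have hdiff : (ρ - σ) • (u - v) = 0 := by linear_combination (norm := module) hρ - hσ
  have huv : u = v := sub_eq_zero.1 ((smul_eq_zero.1 hdiff).resolve_left (sub_ne_zero.2 hρσ))
  have hvp : v = p := by rw [← hρ, huv]; module
  exact ⟨huv.trans hvp, hvp⟩

end Module

section KLdiv

variable {X : Type*} [Fintype X] {P Q W : X → ℝ}

theorem strictConvexOn_mul_log_div {q : ℝ} (hq : 0 < q) :
    StrictConvexOn ℝ (Ici 0) fun x : ℝ => x * Real.log (x / q) := by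
  have split (x : ℝ) : x * Real.log (x / q) = x * Real.log x - x * Real.log q := by
    rcases eq_or_ne x 0 with rfl | hx
    · simp
    · rw [Real.log_div hx hq.ne']; ring
  refine ⟨convex_Ici 0, fun x hx y hy hxy a b ha hb hab => ?_⟩
  have := Real.strictConvexOn_mul_log.2 hx hy hxy ha hb hab
  simp only [split, smul_eq_mul] at this ⊢
  linarith

theorem strictConvexOn_KLdiv (hQpos : ∀ x, 0 < Q x) :
    StrictConvexOn ℝ (Ici 0) fun P : X → ℝ => KLdiv P Q := by
  refine ⟨convex_Ici 0, fun U hU V hV hUV a b ha hb hab => ?_⟩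
  obtain ⟨x, hx⟩ := Function.ne_iff.1 hUV
  simp only [KLdiv, smul_eq_mul, Finset.mul_sum, ← Finset.sum_add_distrib]
  exact Finset.sum_lt_sum
    (fun y _ => (strictConvexOn_mul_log_div (hQpos y)).convexOn.2 (hU y) (hV y) ha.le hb.le hab)
    ⟨x, Finset.mem_univ x,
      (strictConvexOn_mul_log_div (hQpos x)).2 (hU x) (hV x) hx ha hb hab⟩

theorem continuous_KLdiv (hQpos : ∀ x, 0 < Q x) : Continuous fun P : X → ℝ => KLdiv P Q := by
  have rescale (x : X) (p : ℝ) :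
      p * Real.log (p / Q x) = Q x * (p / Q x * Real.log (p / Q x)) := by
    rw [← mul_assoc, mul_div_cancel₀ _ (hQpos x).ne']
  simp only [KLdiv, rescale]
  fun_prop

theorem KLdiv_smul_self (c : ℝ) (Q : X → ℝ) :
    KLdiv (c • Q) Q = c * Real.log c * ∑ x, Q x := by
  rw [KLdiv, Finset.mul_sum]
  refine Finset.sum_congr rfl fun x _ => ?_
  rcases eq_or_ne (Q x) 0 with hx | hx
  · simp [hx]
  · rw [Pi.smul_apply, smul_eq_mul, mul_div_cancel_right₀ _ hx]; ring

theorem KLdiv_self (P : X → ℝ) : KLdiv P P = 0 := by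
  simpa using KLdiv_smul_self 1 P

theorem neg_log_sum_lt_KLdiv (hP : IsPMF P) (hPpos : ∀ x, 0 < P x) (hQpos : ∀ x, 0 < Q x)
    (hPQ : ∀ c : ℝ, P ≠ c • Q) : -Real.log (∑ x, Q x) < KLdiv P Q := by
  have ratio_not_const : ∃ x y, Q x / P x ≠ Q y / P y := by
    by_contra! hconst
    obtain ⟨x₀, -⟩ := Function.ne_iff.1 (hPQ 0)
    refine hPQ (P x₀ / Q x₀) (funext fun x => ?_)
    have := hconst x x₀
    rw [div_eq_div_iff (hPpos x).ne' (hPpos x₀).ne'] at this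
    rw [Pi.smul_apply, smul_eq_mul, div_mul_eq_mul_div, eq_div_iff (hQpos x₀).ne']
    linarith
  obtain ⟨x, y, hxy⟩ := ratio_not_const
  have jensen : ∑ z, P z * Real.log (Q z / P z) < Real.log (∑ z, P z * (Q z / P z)) :=
    strictConcaveOn_log_Ioi.lt_map_sum (fun z _ => hPpos z) hP.2
      (fun z _ => div_pos (hQpos z) (hPpos z)) ⟨x, Finset.mem_univ x, y, Finset.mem_univ y, hxy⟩
  have mass : ∑ z, P z * (Q z / P z) = ∑ z, Q z :=
    Finset.sum_congr rfl fun z _ => mul_div_cancel₀ _ (hPpos z).ne'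
  have flip : ∑ z, P z * Real.log (Q z / P z) = -KLdiv P Q := by
    rw [KLdiv, ← Finset.sum_neg_distrib]
    refine Finset.sum_congr rfl fun z _ => ?_
    rw [← inv_div, Real.log_inv, mul_neg]
  rw [mass, flip] at jensen
  linarith

theorem exists_isPMF_KLdiv_lt (hP : IsPMF P) (hPpos : ∀ x, 0 < P x) (hQpos : ∀ x, 0 < Q x)
    (hPQ : ∀ c : ℝ, P ≠ c • Q) : ∃ R, IsPMF R ∧ KLdiv R Q < KLdiv P Q := by
  have hX : Nonempty X := (Function.ne_iff.1 (hPQ 0)).nonempty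
  have hS : 0 < ∑ x, Q x := Finset.sum_pos (fun x _ => hQpos x) Finset.univ_nonempty
  refine ⟨(∑ x, Q x)⁻¹ • Q, ⟨fun x => (mul_pos (inv_pos.2 hS) (hQpos x)).le, ?_⟩, ?_⟩
  · simp only [Pi.smul_apply, smul_eq_mul, ← Finset.mul_sum]
    exact inv_mul_cancel₀ hS.ne'
  · calc KLdiv ((∑ x, Q x)⁻¹ • Q) Q = -Real.log (∑ x, Q x) := by
          rw [KLdiv_smul_self, Real.log_inv]; field_simp
      _ < KLdiv P Q := neg_log_sum_lt_KLdiv hP hPpos hQpos hPQ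

theorem KLdiv_add_le_sum_sq_div (hPpos : ∀ x, 0 < P x) (hW : ∑ x, W x = 0) (hPW : 0 ≤ P + W) :
    KLdiv (P + W) P ≤ ∑ x, W x ^ 2 / P x := by
  calc KLdiv (P + W) P ≤ ∑ x, (W x ^ 2 / P x + W x) := by
        refine Finset.sum_le_sum fun x _ => ?_
        have hx := (hPpos x).ne'
        calc (P + W) x * Real.log ((P + W) x / P x)
            ≤ (P + W) x * ((P + W) x / P x - 1) := by
              rcases (hPW x).eq_or_lt with h | h
              · simp [← h]
              · exact mul_le_mul_of_nonneg_left
                  (Real.log_le_sub_one_of_pos (div_pos h (hPpos x))) h.le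
          _ = W x ^ 2 / P x + W x := by
              rw [Pi.add_apply]; field_simp; ring
    _ = ∑ x, W x ^ 2 / P x := by rw [Finset.sum_add_distrib, hW, add_zero]

theorem eventually_isPMF_add_smul (hP : IsPMF P) (hPpos : ∀ x, 0 < P x) (hW : ∑ x, W x = 0) :
    ∀ᶠ c in 𝓝 (0 : ℝ), IsPMF (P + c • W) := by
  have hpos : ∀ᶠ c in 𝓝 (0 : ℝ), ∀ x, 0 < P x + c * W x :=
    eventually_all.2 fun x =>
      ((by fun_prop : Continuous fun c : ℝ => P x + c * W x).tendsto' 0 (P x) (by simp)).eventually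
        (lt_mem_nhds (hPpos x))
  filter_upwards [hpos] with c hc
  refine ⟨fun x => (hc x).le, ?_⟩
  simp only [Pi.add_apply, Pi.smul_apply, smul_eq_mul, Finset.sum_add_distrib, ← Finset.mul_sum, hW,
    hP.2, mul_zero, add_zero]

end KLdiv

section Splitting

variable {X : Type*} [Fintype X] {P Q R P₁ P₂ : X → ℝ} {ρ : ℝ}

/-- `P₁` and `P₂` are PMFs whose mixture with weights `ρ` and `1 - ρ` is `P`: the feasible points of
the optimization problem defining `partialDiv ρ P Q`. -/
structure IsSplitting (ρ : ℝ) (P P₁ P₂ : X → ℝ) : Prop where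
  left : IsPMF P₁
  right : IsPMF P₂
  mix : ρ • P₁ + (1 - ρ) • P₂ = P

/-- The objective `ρ D(P₁‖Q) + (1 - ρ) D(P₂‖P)` that `partialDiv ρ P Q` minimizes over the
splittings of `P`. -/
noncomputable def splitCost (ρ : ℝ) (P Q P₁ P₂ : X → ℝ) : ℝ :=
  ρ * KLdiv P₁ Q + (1 - ρ) * KLdiv P₂ P

theorem isCompact_setOf_isSplitting (ρ : ℝ) (P : X → ℝ) :
    IsCompact {w : (X → ℝ) × (X → ℝ) | IsSplitting ρ P w.1 w.2} := by
  have hclosed : IsClosed {w : (X → ℝ) × (X → ℝ) | ρ • w.1 + (1 - ρ) • w.2 = P} :=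
    isClosed_eq (by fun_prop) continuous_const
  convert ((isCompact_stdSimplex ℝ X).prod (isCompact_stdSimplex ℝ X)).inter_right hclosed
    using 1
  ext w
  exact ⟨fun h => ⟨⟨h.left, h.right⟩, h.mix⟩, fun h => ⟨h.1.1, h.1.2, h.2⟩⟩

theorem isSplitting_self (hP : IsPMF P) (ρ : ℝ) : IsSplitting ρ P P P :=
  ⟨hP, hP, by module⟩

theorem partialDiv_eq_sInf_splitCost (ρ : ℝ) (P Q : X → ℝ) :
    partialDiv ρ P Q =
      sInf {v | ∃ P₁ P₂, IsSplitting ρ P P₁ P₂ ∧ v = splitCost ρ P Q P₁ P₂} := by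
  refine congrArg sInf (Set.ext fun v => exists₂_congr fun P₁ P₂ => ?_)
  exact ⟨fun ⟨h₁, h₂, hmix, hv⟩ => ⟨⟨h₁, h₂, funext hmix⟩, hv⟩,
    fun ⟨h, hv⟩ => ⟨h.left, h.right, congrFun h.mix, hv⟩⟩

theorem isLeast_partialDiv (hP : IsPMF P) (hPpos : ∀ x, 0 < P x) (hQpos : ∀ x, 0 < Q x) (ρ : ℝ) :
    IsLeast {v | ∃ P₁ P₂, IsSplitting ρ P P₁ P₂ ∧ v = splitCost ρ P Q P₁ P₂}
      (partialDiv ρ P Q) := by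
  have hcont : Continuous fun w : (X → ℝ) × (X → ℝ) => splitCost ρ P Q w.1 w.2 :=
    (continuous_const.mul ((continuous_KLdiv hQpos).comp continuous_fst)).add
      (continuous_const.mul ((continuous_KLdiv hPpos).comp continuous_snd))
  obtain ⟨w, hw, hmin⟩ := (isCompact_setOf_isSplitting ρ P).exists_isMinOn
    ⟨(P, P), isSplitting_self hP ρ⟩ hcont.continuousOn
  have hleast : IsLeast {v | ∃ P₁ P₂, IsSplitting ρ P P₁ P₂ ∧ v = splitCost ρ P Q P₁ P₂}
      (splitCost ρ P Q w.1 w.2) := by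
    refine ⟨⟨w.1, w.2, hw, rfl⟩, ?_⟩
    rintro _ ⟨P₁, P₂, h, rfl⟩
    exact hmin (show (P₁, P₂) ∈ _ from h)
  rwa [partialDiv_eq_sInf_splitCost, hleast.csInf_eq]

theorem partialDiv_le_splitCost (hP : IsPMF P) (hPpos : ∀ x, 0 < P x) (hQpos : ∀ x, 0 < Q x)
    (h : IsSplitting ρ P P₁ P₂) : partialDiv ρ P Q ≤ splitCost ρ P Q P₁ P₂ :=
  (isLeast_partialDiv hP hPpos hQpos ρ).2 ⟨P₁, P₂, h, rfl⟩

theorem splitCost_perturb_le (hP : IsPMF P) (hR : IsPMF R) (hPpos : ∀ x, 0 < P x)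
    (hQpos : ∀ x, 0 < Q x) (hρ : ρ ∈ Icc 0 1) {ε : ℝ} (hε : ε ∈ Icc 0 1)
    (hV : 0 ≤ P + (-(ρ * ε)) • (R - P)) :
    splitCost ρ P Q (P + ((1 - ρ) * ε) • (R - P)) (P + (-(ρ * ε)) • (R - P)) ≤
      ρ * KLdiv P Q - ρ * (1 - ρ) * ε *
        (KLdiv P Q - KLdiv R Q - ε * (ρ * ∑ x, (R x - P x) ^ 2 / P x)) := by
  obtain ⟨hρ0, hρ1⟩ := hρ
  have hρ1' : 0 ≤ 1 - ρ := sub_nonneg.2 hρ1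
  have first_order : KLdiv (P + ((1 - ρ) * ε) • (R - P)) Q ≤
      (1 - (1 - ρ) * ε) * KLdiv P Q + (1 - ρ) * ε * KLdiv R Q := by
    rw [show P + ((1 - ρ) * ε) • (R - P) = (1 - (1 - ρ) * ε) • P + ((1 - ρ) * ε) • R by module]
    exact (strictConvexOn_KLdiv hQpos).convexOn.2 hP.1 hR.1
      (sub_nonneg.2 (mul_le_one₀ (by linarith) hε.1 hε.2)) (mul_nonneg hρ1' hε.1) (by ring)
  have second_order : KLdiv (P + (-(ρ * ε)) • (R - P)) P ≤
      (ρ * ε) ^ 2 * ∑ x, (R x - P x) ^ 2 / P x := by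
    refine (KLdiv_add_le_sum_sq_div hPpos ?_ hV).trans_eq ?_
    · simp [← Finset.mul_sum, hP.2, hR.2]
    · simp only [Pi.smul_apply, Pi.sub_apply, smul_eq_mul, mul_pow, neg_sq, mul_div_assoc,
        Finset.mul_sum]
  calc splitCost ρ P Q (P + ((1 - ρ) * ε) • (R - P)) (P + (-(ρ * ε)) • (R - P))
      ≤ ρ * ((1 - (1 - ρ) * ε) * KLdiv P Q + (1 - ρ) * ε * KLdiv R Q) +
          (1 - ρ) * ((ρ * ε) ^ 2 * ∑ x, (R x - P x) ^ 2 / P x) :=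
        add_le_add (mul_le_mul_of_nonneg_left first_order hρ0)
          (mul_le_mul_of_nonneg_left second_order hρ1')
    _ = _ := by ring

theorem partialDiv_lt_mul_KLdiv (hP : IsPMF P) (hR : IsPMF R) (hPpos : ∀ x, 0 < P x)
    (hQpos : ∀ x, 0 < Q x) (hRP : KLdiv R Q < KLdiv P Q) (hρ : ρ ∈ Ioo 0 1) :
    partialDiv ρ P Q < ρ * KLdiv P Q := by
  have hW : ∑ x, (R - P) x = 0 := by simp [hP.2, hR.2]
  have tendsto_mul (k : ℝ) : Tendsto (fun ε : ℝ => ε * k) (𝓝[>] 0) (𝓝 0) :=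
    ((continuous_mul_const k).tendsto' 0 0 (zero_mul k)).mono_left nhdsWithin_le_nhds
  have hpmf (k : ℝ) : ∀ᶠ ε in 𝓝[>] 0, IsPMF (P + (ε * k) • (R - P)) :=
    (tendsto_mul k).eventually (eventually_isPMF_add_smul hP hPpos hW)
  have hsmall := (tendsto_mul (ρ * ∑ x, (R x - P x) ^ 2 / P x)).eventually
    (gt_mem_nhds (sub_pos.2 hRP))
  obtain ⟨ε, hU, hV, hε, hε0, hε1⟩ :=
    ((hpmf (1 - ρ)).and ((hpmf (-ρ)).and
      (hsmall.and (Ioo_mem_nhdsGT (zero_lt_one' ℝ))))).exists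
  rw [mul_comm] at hU
  rw [mul_comm, neg_mul] at hV
  have hsplit : IsSplitting ρ P (P + ((1 - ρ) * ε) • (R - P)) (P + (-(ρ * ε)) • (R - P)) :=
    ⟨hU, hV, by module⟩
  have gain : 0 < ρ * (1 - ρ) * ε *
      (KLdiv P Q - KLdiv R Q - ε * (ρ * ∑ x, (R x - P x) ^ 2 / P x)) :=
    mul_pos (mul_pos (mul_pos hρ.1 (sub_pos.2 hρ.2)) hε0) (sub_pos.2 hε)
  calc partialDiv ρ P Q
      ≤ splitCost ρ P Q (P + ((1 - ρ) * ε) • (R - P)) (P + (-(ρ * ε)) • (R - P)) :=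
        partialDiv_le_splitCost hP hPpos hQpos hsplit
    _ ≤ ρ * KLdiv P Q - ρ * (1 - ρ) * ε *
          (KLdiv P Q - KLdiv R Q - ε * (ρ * ∑ x, (R x - P x) ^ 2 / P x)) :=
        splitCost_perturb_le hP hR hPpos hQpos (Ioo_subset_Icc_self hρ) ⟨hε0.le, hε1.le⟩ hV.1
    _ < ρ * KLdiv P Q := sub_lt_self _ gain

theorem exists_isSplitting_average (hPpos : ∀ x, 0 < P x) (hQpos : ∀ x, 0 < Q x)
    {ρ₁ ρ₂ a b : ℝ} (hρ₁ : ρ₁ ∈ Icc 0 1) (hρ₂ : ρ₂ ∈ Icc 0 1) (hne : ρ₁ ≠ ρ₂)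
    (ha : 0 < a) (hb : 0 < b) (hab : a + b = 1) {U₁ V₁ U₂ V₂ : X → ℝ}
    (h₁ : IsSplitting ρ₁ P U₁ V₁) (h₂ : IsSplitting ρ₂ P U₂ V₂) :
    ∃ U V, IsSplitting (a * ρ₁ + b * ρ₂) P U V ∧
      splitCost (a * ρ₁ + b * ρ₂) P Q U V ≤
        a * splitCost ρ₁ P Q U₁ V₁ + b * splitCost ρ₂ P Q U₂ V₂ ∧
      (splitCost (a * ρ₁ + b * ρ₂) P Q U V =
        a * splitCost ρ₁ P Q U₁ V₁ + b * splitCost ρ₂ P Q U₂ V₂ → U = P ∧ V = P) := by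
  have hρ : a * ρ₁ + b * ρ₂ ∈ Ioo 0 1 := by
    simpa using strictConvex_Icc (0 : ℝ) 1 hρ₁ hρ₂ hne ha hb hab
  have hρ' : 1 - (a * ρ₁ + b * ρ₂) = a * (1 - ρ₁) + b * (1 - ρ₂) := by linear_combination -hab
  have hconv {D : X → ℝ} (hD : ∀ x, 0 < D x) :
      StrictConvexOn ℝ (stdSimplex ℝ X) fun P => KLdiv P D :=
    (strictConvexOn_KLdiv hD).subset (fun _ h => h.1) (convex_stdSimplex ℝ X)
  obtain ⟨U, hU, hUmix, hUle, hUeq⟩ :=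
    exists_weighted_average_of_strictConvexOn (hconv hQpos) h₁.left h₂.left
      (mul_nonneg ha.le hρ₁.1) (mul_nonneg hb.le hρ₂.1) hρ.1
  obtain ⟨V, hV, hVmix, hVle, hVeq⟩ :=
    exists_weighted_average_of_strictConvexOn (hconv hPpos) h₁.right h₂.right
      (mul_nonneg ha.le (sub_nonneg.2 hρ₁.2)) (mul_nonneg hb.le (sub_nonneg.2 hρ₂.2))
      (hρ' ▸ sub_pos.2 hρ.2)
  simp only [splitCost, hρ']
  refine ⟨U, V, ⟨hU, hV, ?_⟩, by linarith, fun heq => ?_⟩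
  · rw [hρ', hUmix, hVmix]
    linear_combination (norm := module) a • h₁.mix + b • h₂.mix + hab • P
  obtain ⟨hU₁, hU₂⟩ := hUeq (by linarith)
  obtain ⟨hV₁, hV₂⟩ := hVeq (by linarith)
  have hmix₁ : ρ₁ • U + (1 - ρ₁) • V = P := smul_right_injective _ ha.ne' <| by
    linear_combination (norm := module) a • h₁.mix - hU₁ - hV₁
  have hmix₂ : ρ₂ • U + (1 - ρ₂) • V = P := smul_right_injective _ hb.ne' <| by
    linear_combination (norm := module) b • h₂.mix - hU₂ - hV₂
  exact eq_and_eq_of_affine_combinations_eq hne hmix₁ hmix₂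

end Splitting

theorem partialDiv_strictConvex_general {X : Type*} [Fintype X] {P Q : X → ℝ} (hP : IsPMF P)
    (hPpos : ∀ x, 0 < P x) (hQpos : ∀ x, 0 < Q x) (hPQ : ∀ c : ℝ, P ≠ c • Q) :
    StrictConvexOn ℝ (Icc 0 1) fun ρ => partialDiv ρ P Q := by
  refine ⟨convex_Icc 0 1, fun ρ₁ hρ₁ ρ₂ hρ₂ hne a b ha hb hab => ?_⟩
  obtain ⟨U₁, V₁, h₁, hmin₁⟩ := (isLeast_partialDiv hP hPpos hQpos ρ₁).1
  obtain ⟨U₂, V₂, h₂, hmin₂⟩ := (isLeast_partialDiv hP hPpos hQpos ρ₂).1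
  obtain ⟨U, V, h, hle, heq⟩ :=
    exists_isSplitting_average hPpos hQpos hρ₁ hρ₂ hne ha hb hab h₁ h₂
  simp only [smul_eq_mul, hmin₁, hmin₂]
  rcases hle.lt_or_eq with hlt | htie
  · exact (partialDiv_le_splitCost hP hPpos hQpos h).trans_lt hlt
  · obtain ⟨hUP, hVP⟩ := heq htie
    obtain ⟨R, hR, hRP⟩ := exists_isPMF_KLdiv_lt hP hPpos hQpos hPQ
    have hρ : a * ρ₁ + b * ρ₂ ∈ Ioo 0 1 := by
      simpa using strictConvex_Icc (0 : ℝ) 1 hρ₁ hρ₂ hne ha hb hab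
    calc partialDiv (a * ρ₁ + b * ρ₂) P Q
        < (a * ρ₁ + b * ρ₂) * KLdiv P Q := partialDiv_lt_mul_KLdiv hP hR hPpos hQpos hRP hρ
      _ = splitCost (a * ρ₁ + b * ρ₂) P Q U V := by
          rw [splitCost, hUP, hVP, KLdiv_self, mul_zero, add_zero]
      _ = _ := htie

/-- If `P, Q > 0` pointwise and `P ≠ Q`, then `ρ ↦ d_ρ(P‖Q)` is strictly convex on `[0,1]`. -/
theorem partialDiv_strictConvex {X : Type*} [Fintype X] (P Q : X → ℝ)
    (hP : IsPMF P) (hQ : IsPMF Q)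
    (hPpos : ∀ x, 0 < P x) (hQpos : ∀ x, 0 < Q x) (hne : P ≠ Q) :
    ∀ ρ₁ ∈ Set.Icc (0 : ℝ) 1, ∀ ρ₂ ∈ Set.Icc (0 : ℝ) 1, ρ₁ ≠ ρ₂ →
      ∀ l ∈ Set.Ioo (0 : ℝ) 1,
        partialDiv (l * ρ₁ + (1 - l) * ρ₂) P Q <
          l * partialDiv ρ₁ P Q + (1 - l) * partialDiv ρ₂ P Q := by
  have hPQ : ∀ c : ℝ, P ≠ c • Q := by
    rintro c rfl
    have hc : c = 1 := by simpa [← Finset.mul_sum, hQ.2] using hP.2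
    exact hne (by rw [hc, one_smul])
  intro ρ₁ hρ₁ ρ₂ hρ₂ hρ l hl
  exact (partialDiv_strictConvex_general hP hPpos hQpos hPQ).2 hρ₁ hρ₂ hρ hl.1 (sub_pos.2 hl.2)
    (add_sub_cancel _ _)
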